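/- arXiv:2111.10851 — 3 statements merged into one kernel-verified Lean document; each statement's English description precedes it below -/
import Mathlib

section
/- Let Δ be a simplicial complex on the vertex set [n] and let v be a vertex of Δ. Then v is a shedding vertex of Δ if and only if the set of associated primes of the ideal I_Δ + (x_v) equals the set of those associated primes 𝔭 of I_Δ with x_v ∈ 𝔭. -/
open MvPolynomial

namespace Paper

/-- An (abstract) simplicial complex: a nonempty, downward closed collection of
finite subsets of the vertex set. -/
def IsComplex {n : ℕ} (Δ : Set (Finset (Fin n))) : Prop :=
  Δ.Nonempty ∧ ∀ F ∈ Δ, ∀ G, G ⊆ F → G ∈ Δ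

/-- The deletion `del_Δ(v)`. -/
def delC {n : ℕ} (Δ : Set (Finset (Fin n))) (v : Fin n) : Set (Finset (Fin n)) :=
  {G ∈ Δ | v ∉ G}

/-- The link `link_Δ(v)`. -/
def linkC {n : ℕ} (Δ : Set (Finset (Fin n))) (v : Fin n) : Set (Finset (Fin n)) :=
  {G | G ∈ Δ ∧ v ∉ G ∧ insert v G ∈ Δ}

/-- A facet is a maximal face. -/
def IsFacet {n : ℕ} (Δ : Set (Finset (Fin n))) (F : Finset (Fin n)) : Prop :=
  F ∈ Δ ∧ ∀ G ∈ Δ, F ⊆ G → G = F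

/-- A vertex `v` of `Δ` is a shedding vertex if every facet of `del_Δ(v)` is a facet
of `Δ`. -/
def IsSheddingVertex {n : ℕ} (Δ : Set (Finset (Fin n))) (v : Fin n) : Prop :=
  {v} ∈ Δ ∧ ∀ F, IsFacet (delC Δ v) F → IsFacet Δ F

/-- `Δ` is a simplex: it has a unique maximal face containing all faces. -/
def IsSimplexC {n : ℕ} (Δ : Set (Finset (Fin n))) : Prop :=
  ∃ F ∈ Δ, ∀ G ∈ Δ, G ⊆ F

/-- Vertex decomposability, defined recursively. -/
inductive IsVertexDecomposable {n : ℕ} : Set (Finset (Fin n)) → Prop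
  | simplex {Δ : Set (Finset (Fin n))} (h : IsComplex Δ) (hs : IsSimplexC Δ) :
      IsVertexDecomposable Δ
  | step {Δ : Set (Finset (Fin n))} (h : IsComplex Δ) (v : Fin n)
      (hv : IsSheddingVertex Δ v)
      (h1 : IsVertexDecomposable (linkC Δ v)) (h2 : IsVertexDecomposable (delC Δ v)) :
      IsVertexDecomposable Δ

/-- The Stanley-Reisner ideal of `Δ`, generated by the squarefree monomials
`x_F = ∏_{i ∈ F} x_i` with `F ∉ Δ`. -/
noncomputable def SRIdeal (n : ℕ) (K : Type) [Field K] (Δ : Set (Finset (Fin n))) :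
    Ideal (MvPolynomial (Fin n) K) :=
  Ideal.span {m | ∃ F : Finset (Fin n), F ∉ Δ ∧ m = ∏ i ∈ F, X i}

/-- `P_{F̄}`, the prime ideal generated by the variables `x_i` with `i ∉ F`. -/
noncomputable def facePrime (n : ℕ) (K : Type) [Field K] (F : Finset (Fin n)) :
    Ideal (MvPolynomial (Fin n) K) :=
  Ideal.span ((fun i => (X i : MvPolynomial (Fin n) K)) '' {i | i ∉ F})

theorem mem_facePrime {n : ℕ} {K : Type} [Field K] (F : Finset (Fin n))
    (p : MvPolynomial (Fin n) K) :
    p ∈ facePrime n K F ↔ ∀ m ∈ p.support, ¬ m.support ⊆ F := by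
  unfold facePrime
  rw [mem_ideal_span_X_image]
  refine forall₂_congr fun m _ => ?_
  rw [Finset.not_subset]
  constructor
  · rintro ⟨i, hi, h⟩
    exact ⟨i, Finsupp.mem_support_iff.2 h, hi⟩
  · rintro ⟨i, h, hi⟩
    exact ⟨i, hi, Finsupp.mem_support_iff.1 h⟩

theorem prod_X_eq {n : ℕ} {K : Type} [Field K] (F : Finset (Fin n)) :
    (∏ i ∈ F, X i : MvPolynomial (Fin n) K) =
      monomial (∑ i ∈ F, Finsupp.single i 1) 1 := by
  rw [monomial_sum_one]
  rfl

theorem sum_single_apply {n : ℕ} (F : Finset (Fin n)) (j : Fin n) :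
    (∑ i ∈ F, Finsupp.single i 1 : Fin n →₀ ℕ) j = if j ∈ F then 1 else 0 := by
  classical
  simp [Finsupp.finsetSum_apply, Finsupp.single_apply]

theorem sum_single_le {n : ℕ} (F : Finset (Fin n)) (m : Fin n →₀ ℕ) :
    (∑ i ∈ F, Finsupp.single i 1 : Fin n →₀ ℕ) ≤ m ↔ F ⊆ m.support := by
  rw [Finsupp.le_def]
  constructor
  · intro h i hi
    have := h i
    rw [sum_single_apply, if_pos hi] at this
    rw [Finsupp.mem_support_iff]
    omega
  · intro h i
    rw [sum_single_apply]
    split_ifs with hi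
    · have := Finsupp.mem_support_iff.1 (h hi)
      omega
    · omega

theorem mem_SRIdeal {n : ℕ} {K : Type} [Field K] {Δ : Set (Finset (Fin n))}
    (hΔ : IsComplex Δ) (p : MvPolynomial (Fin n) K) :
    p ∈ SRIdeal n K Δ ↔ ∀ m ∈ p.support, m.support ∉ Δ := by
  have : SRIdeal n K Δ = Ideal.span ((fun s => monomial s (1 : K)) ''
      ((fun F : Finset (Fin n) => (∑ i ∈ F, Finsupp.single i 1 : Fin n →₀ ℕ)) '' {F | F ∉ Δ})) := by
    unfold SRIdeal
    congr 1
    ext m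
    simp only [prod_X_eq, Set.mem_ofPred_eq, Set.mem_image, exists_exists_and_eq_and]
    exact exists_congr fun F => and_congr_right fun _ => eq_comm
  rw [this, mem_ideal_span_monomial_image]
  refine forall₂_congr fun m _ => ?_
  constructor
  · rintro ⟨_, ⟨F, hF, rfl⟩, h⟩ hm
    exact hF (hΔ.2 _ hm _ ((sum_single_le F m).1 h))
  · intro h
    exact ⟨_, ⟨m.support, h, rfl⟩, (sum_single_le _ m).2 le_rfl⟩

theorem exists_facet {n : ℕ} {Δ : Set (Finset (Fin n))} {G : Finset (Fin n)} (hG : G ∈ Δ) :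
    ∃ F, IsFacet Δ F ∧ G ⊆ F := by
  obtain ⟨F, hGF, hF⟩ := (Set.toFinite Δ).exists_le_maximal hG
  exact ⟨F, ⟨hF.prop, fun H hH hFH => (le_antisymm hFH (hF.le_of_ge hH hFH)).symm⟩, hGF⟩

theorem mem_SRIdeal_iff_facets {n : ℕ} {K : Type} [Field K] {Δ : Set (Finset (Fin n))}
    (hΔ : IsComplex Δ) (p : MvPolynomial (Fin n) K) :
    p ∈ SRIdeal n K Δ ↔ ∀ F, IsFacet Δ F → p ∈ facePrime n K F := by
  rw [mem_SRIdeal hΔ]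
  simp only [mem_facePrime]
  constructor
  · intro h F hF m hm hmF
    exact h m hm (hΔ.2 _ hF.1 _ hmF)
  · intro h m hm hmΔ
    obtain ⟨F, hF, hmF⟩ := exists_facet hmΔ
    exact h F hF m hm hmF

theorem facePrime_isPrime {n : ℕ} {K : Type} [Field K] (F : Finset (Fin n)) :
    (facePrime n K F).IsPrime := by
  classical
  let φ : MvPolynomial (Fin n) K →ₐ[K] MvPolynomial (Fin n) K :=
    aeval fun i => if i ∈ F then X i else 0
  have h : facePrime n K F = RingHom.ker φ := by
    apply le_antisymm
    · unfold facePrime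
      rw [Ideal.span_le]
      rintro _ ⟨i, hi, rfl⟩
      have hi' : i ∉ F := hi
      simp [φ, hi']
    · intro p hp
      have hc : (Ideal.Quotient.mkₐ K (facePrime n K F)).comp φ =
          Ideal.Quotient.mkₐ K (facePrime n K F) := by
        apply MvPolynomial.algHom_ext
        intro i
        by_cases hi : i ∈ F
        · simp [φ, hi]
        · have : (X i : MvPolynomial (Fin n) K) ∈ facePrime n K F :=
            Ideal.subset_span ⟨i, hi, rfl⟩
          simp [φ, hi, (Ideal.Quotient.eq_zero_iff_mem.2 this)]
      have := DFunLike.congr_fun hc p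
      rw [AlgHom.comp_apply, (RingHom.mem_ker).1 hp, map_zero] at this
      exact Ideal.Quotient.eq_zero_iff_mem.1 this.symm
  rw [h]
  exact RingHom.ker_isPrime _

theorem X_mem_facePrime {n : ℕ} {K : Type} [Field K] (F : Finset (Fin n)) (v : Fin n) :
    (X v : MvPolynomial (Fin n) K) ∈ facePrime n K F ↔ v ∉ F := by
  rw [mem_facePrime, support_X]
  simp

theorem facePrime_inj {n : ℕ} {K : Type} [Field K] {F G : Finset (Fin n)}
    (h : facePrime n K F = facePrime n K G) : F = G := by
  ext v
  rw [← not_iff_not, ← X_mem_facePrime (K := K), ← X_mem_facePrime (K := K), h]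

theorem prod_mem_facePrime {n : ℕ} {K : Type} [Field K] (F G : Finset (Fin n)) :
    (∏ i ∈ F, X i : MvPolynomial (Fin n) K) ∈ facePrime n K G ↔ ¬ F ⊆ G := by
  have := facePrime_isPrime (K := K) G
  rw [Ideal.IsPrime.prod_mem_iff, Finset.not_subset]
  simp only [X_mem_facePrime]

theorem assPrimes_eq {n : ℕ} {K : Type} [Field K] {Δ : Set (Finset (Fin n))}
    (hΔ : IsComplex Δ) (P : Ideal (MvPolynomial (Fin n) K)) :
    P ∈ associatedPrimes (MvPolynomial (Fin n) K) (MvPolynomial (Fin n) K ⧸ SRIdeal n K Δ) ↔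
      ∃ F, IsFacet Δ F ∧ P = facePrime n K F := by
  classical
  have key : ∀ g f : MvPolynomial (Fin n) K,
      f ∈ Submodule.colon (⊥ : Submodule (MvPolynomial (Fin n) K)
        (MvPolynomial (Fin n) K ⧸ SRIdeal n K Δ)) {Ideal.Quotient.mk _ g} ↔
      ∀ F, IsFacet Δ F → g ∉ facePrime n K F → f ∈ facePrime n K F := by
    intro g f
    have hs : f • (Ideal.Quotient.mk (SRIdeal n K Δ) g) =
        Ideal.Quotient.mk (SRIdeal n K Δ) (f * g) := rfl
    rw [Submodule.mem_colon_singleton, hs,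
      Submodule.mem_bot, Ideal.Quotient.eq_zero_iff_mem, mem_SRIdeal_iff_facets hΔ]
    refine forall₂_congr fun F _ => ?_
    rw [(facePrime_isPrime (K := K) F).mul_mem_iff_mem_or_mem]
    tauto
  rw [AssociatedPrimes.mem_iff, IsAssociatedPrime, Submodule.isAssociatedPrime_iff]
  constructor
  · rintro ⟨hP, x, hx⟩
    obtain ⟨g, rfl⟩ := Ideal.Quotient.mk_surjective x
    have hle : (Finset.univ.filter fun F => IsFacet Δ F ∧ g ∉ facePrime n K F).inf
        (facePrime n K) ≤ P := by
      intro f hf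
      rw [hx, key]
      intro F hF hg
      exact Finset.inf_le (f := facePrime n K)
        (Finset.mem_filter.2 ⟨Finset.mem_univ F, hF, hg⟩) hf
    obtain ⟨F, hF, hFP⟩ := hP.inf_le'.1 hle
    have hF' := (Finset.mem_filter.1 hF).2
    refine ⟨F, hF'.1, le_antisymm ?_ hFP⟩
    intro f hf
    rw [hx, key] at hf
    exact hf F hF'.1 hF'.2
  · rintro ⟨F, hF, rfl⟩
    refine ⟨facePrime_isPrime F, Ideal.Quotient.mk _ (∏ i ∈ F, X i), ?_⟩
    ext f
    rw [key]
    constructor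
    · intro hf G hG hFG
      rw [prod_mem_facePrime, not_not] at hFG
      rwa [hF.2 G hG.1 hFG]
    · intro h
      exact h F hF (by rw [prod_mem_facePrime]; simp)

theorem delC_isComplex {n : ℕ} {Δ : Set (Finset (Fin n))} (hΔ : IsComplex Δ) (v : Fin n) :
    IsComplex (delC Δ v) := by
  obtain ⟨⟨F, hF⟩, h⟩ := hΔ
  exact ⟨⟨∅, h F hF _ (Finset.empty_subset _), Finset.notMem_empty v⟩,
    fun F hF G hG => ⟨h F hF.1 G hG, fun hv => hF.2 (hG hv)⟩⟩

theorem SRIdeal_add {n : ℕ} {K : Type} [Field K] (Δ : Set (Finset (Fin n))) (v : Fin n) :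
    SRIdeal n K Δ + Ideal.span {(X v : MvPolynomial (Fin n) K)} = SRIdeal n K (delC Δ v) := by
  apply le_antisymm
  · refine sup_le ?_ ?_
    · refine Ideal.span_mono ?_
      rintro _ ⟨F, hF, rfl⟩
      exact ⟨F, fun h => hF h.1, rfl⟩
    · rw [Ideal.span_singleton_le_iff_mem]
      exact Ideal.subset_span ⟨{v}, fun h => h.2 (Finset.mem_singleton_self v), by simp⟩
  · refine Ideal.span_le.2 ?_
    rintro _ ⟨F, hF, rfl⟩
    by_cases hv : v ∈ F
    · exact Ideal.mem_sup_right (Ideal.mem_span_singleton.2 (Finset.dvd_prod_of_mem X hv))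
    · exact Ideal.mem_sup_left (Ideal.subset_span ⟨F, fun h => hF ⟨h, hv⟩, rfl⟩)

/-- A vertex `v` of a simplicial complex `Δ` on `[n]` is a shedding vertex iff the
associated primes of `I_Δ + (x_v)` are exactly the associated primes of `I_Δ`
containing `x_v`. -/
theorem statement_0 (n : ℕ) (K : Type) [Field K] (Δ : Set (Finset (Fin n)))
    (hΔ : IsComplex Δ) (hvert : ∀ u : Fin n, {u} ∈ Δ) (v : Fin n) :
    IsSheddingVertex Δ v ↔
      associatedPrimes (MvPolynomial (Fin n) K)
          (MvPolynomial (Fin n) K ⧸ (SRIdeal n K Δ + Ideal.span {(X v : MvPolynomial (Fin n) K)})) =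
        {𝔭 ∈ associatedPrimes (MvPolynomial (Fin n) K) (MvPolynomial (Fin n) K ⧸ SRIdeal n K Δ) |
          (X v : MvPolynomial (Fin n) K) ∈ 𝔭} := by
  rw [SRIdeal_add]
  constructor
  · rintro ⟨_, h⟩
    ext P
    rw [assPrimes_eq (delC_isComplex hΔ v), Set.mem_ofPred_eq, assPrimes_eq hΔ]
    constructor
    · rintro ⟨F, hF, rfl⟩
      exact ⟨⟨F, h F hF, rfl⟩, (X_mem_facePrime F v).2 hF.1.2⟩
    · rintro ⟨⟨F, hF, rfl⟩, hv⟩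
      exact ⟨F, ⟨⟨hF.1, (X_mem_facePrime F v).1 hv⟩, fun G hG => hF.2 G hG.1⟩, rfl⟩
  · intro h
    refine ⟨hvert v, fun F hF => ?_⟩
    have h1 := (assPrimes_eq (K := K) (delC_isComplex hΔ v) _).2 ⟨F, hF, rfl⟩
    rw [h] at h1
    obtain ⟨G, hG, e⟩ := (assPrimes_eq hΔ _).1 h1.1
    rwa [facePrime_inj e]

end Paper
end

section
/- Let I be a squarefree monomial ideal in R = K[x_1,…,x_n] and suppose x_i^k (with x_i ∉ √I, k ≥ 1) satisfies ass(I + (x_i^k)) = {𝔭 ∈ ass(I) : x_i ∈ 𝔭}, and suppose there exists a minimal prime 𝔭 of I with x_i ∉ 𝔭. Then there exists a minimal prime 𝔮 of I with x_i ∈ 𝔮 and 𝔮 ⊆ 𝔭 + (x_i^k), and consequently k = 1. -/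
open MvPolynomial

namespace Paper

/-- A monomial ideal: an ideal generated by monomials. -/
def IsMonomialIdeal {n : ℕ} {K : Type} [Field K] (I : Ideal (MvPolynomial (Fin n) K)) : Prop :=
  ∃ S : Set (Fin n →₀ ℕ), I = Ideal.span ((fun a => monomial a (1 : K)) '' S)

/-- A squarefree monomial ideal: an ideal generated by squarefree monomials. -/
def IsSquarefreeMonomialIdeal {n : ℕ} {K : Type} [Field K]
    (I : Ideal (MvPolynomial (Fin n) K)) : Prop :=
  ∃ S : Set (Fin n →₀ ℕ), (∀ a ∈ S, ∀ i, a i ≤ 1) ∧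
    I = Ideal.span ((fun a => monomial a (1 : K)) '' S)

/-- An ideal `I` is unmixed if `dim A/I = dim A/𝔭` for every associated prime `𝔭` of `I`. -/
def IsUnmixed {A : Type} [CommRing A] (I : Ideal A) : Prop :=
  ∀ 𝔭 ∈ associatedPrimes A (A ⧸ I), ringKrullDim (A ⧸ I) = ringKrullDim (A ⧸ 𝔭)

/-- ass-decomposable ideals: `I` is ass-decomposable if it is primary, or there are a
variable `x_i ∉ √I` and `k ≥ 1` with `ass(I + (x_i^k)) = {𝔭 ∈ ass(I) : x_i ∈ 𝔭}` such
that `I + (x_i^k)` and `I : x_i^k` are both ass-decomposable. -/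
inductive IsAssDecomposable {n : ℕ} {K : Type} [Field K] :
    Ideal (MvPolynomial (Fin n) K) → Prop
  | primary {I : Ideal (MvPolynomial (Fin n) K)} (h : I.IsPrimary) : IsAssDecomposable I
  | step {I : Ideal (MvPolynomial (Fin n) K)} (i : Fin n) (k : ℕ) (hk : 1 ≤ k)
      (hx : X i ∉ I.radical)
      (hass : associatedPrimes (MvPolynomial (Fin n) K)
          (MvPolynomial (Fin n) K ⧸ (I + Ideal.span {(X i : MvPolynomial (Fin n) K) ^ k})) =
        {𝔭 ∈ associatedPrimes (MvPolynomial (Fin n) K) (MvPolynomial (Fin n) K ⧸ I) |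
          (X i : MvPolynomial (Fin n) K) ∈ 𝔭})
      (h1 : IsAssDecomposable (I + Ideal.span {(X i : MvPolynomial (Fin n) K) ^ k}))
      (h2 : IsAssDecomposable (I.colon (Ideal.span {(X i : MvPolynomial (Fin n) K) ^ k}))) :
      IsAssDecomposable I

lemma isPrime_P {n : ℕ} {K : Type} [Field K] (s : Set (Fin n)) :
    (Ideal.span (X '' s : Set (MvPolynomial (Fin n) K))).IsPrime := by
  classical
  set P := Ideal.span (X '' s : Set (MvPolynomial (Fin n) K)) with hP
  let φ : MvPolynomial (Fin n) K →ₐ[K] MvPolynomial (Fin n) K :=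
    aeval (fun j => if j ∈ s then 0 else X j)
  have hcomp : (Ideal.Quotient.mkₐ K P).comp φ = Ideal.Quotient.mkₐ K P := by
    apply MvPolynomial.algHom_ext
    intro j
    by_cases hj : j ∈ s
    · have : (X j : MvPolynomial (Fin n) K) ∈ P := Ideal.subset_span ⟨j, hj, rfl⟩
      simp [φ, hj, Ideal.Quotient.eq_zero_iff_mem.mpr this]
    · simp [φ, hj]
  have hker : P = RingHom.ker φ.toRingHom := by
    apply le_antisymm
    · rw [hP, Ideal.span_le]
      rintro _ ⟨j, hj, rfl⟩
      simp [φ, hj, RingHom.mem_ker]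
    · intro f hf
      have h0 : φ f = 0 := hf
      have := DFunLike.congr_fun hcomp f
      simp only [AlgHom.comp_apply, h0, map_zero] at this
      exact Ideal.Quotient.eq_zero_iff_mem.mp this.symm
  rw [hker]
  exact RingHom.ker_isPrime _

lemma X_mem_P {n : ℕ} {K : Type} [Field K] (s : Set (Fin n)) (j : Fin n) :
    (X j : MvPolynomial (Fin n) K) ∈ Ideal.span (X '' s : Set (MvPolynomial (Fin n) K)) ↔ j ∈ s := by
  rw [mem_ideal_span_X_image, support_X]
  simp [Finsupp.single_apply]

lemma monomial_mem_P {n : ℕ} {K : Type} [Field K] (s : Set (Fin n)) (a : Fin n →₀ ℕ) :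
    (monomial a 1 : MvPolynomial (Fin n) K) ∈ Ideal.span (X '' s : Set (MvPolynomial (Fin n) K)) ↔
      ∃ j ∈ s, a j ≠ 0 := by
  classical
  rw [mem_ideal_span_X_image, support_monomial]
  simp

lemma radical_sf {n : ℕ} {K : Type} [Field K] {I : Ideal (MvPolynomial (Fin n) K)}
    (hsf : IsSquarefreeMonomialIdeal I) : I.IsRadical := by
  obtain ⟨S, hS, rfl⟩ := hsf
  rintro f ⟨N, hN⟩
  by_contra hf
  rw [mem_ideal_span_monomial_image] at hf
  push Not at hf
  obtain ⟨m, hm, hmS⟩ := hf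
  have hle : Ideal.span ((fun a => monomial a (1 : K)) '' S) ≤
      Ideal.span (X '' {j | m j = 0} : Set (MvPolynomial (Fin n) K)) := by
    rw [Ideal.span_le]
    rintro _ ⟨a, ha, rfl⟩
    refine (monomial_mem_P _ a).2 ?_
    have h := hmS a ha
    rw [Finsupp.le_def] at h
    push Not at h
    obtain ⟨j, hj⟩ := h
    have := hS a ha j
    exact ⟨j, by simp; omega, by omega⟩
  have h1 := (isPrime_P (K := K) {j | m j = 0}).mem_of_pow_mem N (hle hN)
  rw [mem_ideal_span_X_image] at h1
  obtain ⟨j, hj, hj'⟩ := h1 m hm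
  exact hj' hj

lemma min_of_ass {A : Type} [CommRing A] [IsNoetherianRing A] {I q : Ideal A}
    (hI : I.IsRadical) (hq : q ∈ associatedPrimes A (A ⧸ I)) : q ∈ I.minimalPrimes := by
  obtain ⟨hp, x, hx⟩ := Submodule.isAssociatedPrime_iff.1 hq
  obtain ⟨g, rfl⟩ := Ideal.Quotient.mk_surjective x
  have key : ∀ r, r ∈ q ↔ r * g ∈ I := by
    intro r
    rw [hx, Submodule.mem_colon_singleton, Submodule.mem_bot, ← Ideal.Quotient.eq_zero_iff_mem]
    rfl
  have hgq : g ∉ q := by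
    intro h
    have h2 : g ∈ I := hI ⟨2, by rw [pow_two]; exact (key g).1 h⟩
    exact hp.ne_top ((Ideal.eq_top_iff_one _).2 ((key 1).2 (by simpa using h2)))
  refine ⟨⟨hp, fun r hr => (key r).2 (I.mul_mem_right _ hr)⟩, ?_⟩
  rintro Q ⟨hQ, hIQ⟩ hQq r hr
  rcases hQ.mem_or_mem (hIQ ((key r).1 hr)) with h | h
  · exact h
  · exact absurd (hQq h) hgq

/-- For a squarefree monomial ideal `I` and `x_i^k` with `x_i ∉ √I` satisfying
`ass(I + (x_i^k)) = {𝔭 ∈ ass(I) : x_i ∈ 𝔭}`, if there is a minimal prime `𝔭` of `I`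
with `x_i ∉ 𝔭` then there is a minimal prime `𝔮` of `I` with `x_i ∈ 𝔮` and
`𝔮 ⊆ 𝔭 + (x_i^k)`; consequently `k = 1`. -/
theorem statement_6 (n : ℕ) (K : Type) [Field K] (I : Ideal (MvPolynomial (Fin n) K))
    (hsf : IsSquarefreeMonomialIdeal I) (i : Fin n) (k : ℕ) (hk : 1 ≤ k)
    (hx : (X i : MvPolynomial (Fin n) K) ∉ I.radical)
    (hass : associatedPrimes (MvPolynomial (Fin n) K)
        (MvPolynomial (Fin n) K ⧸ (I + Ideal.span {(X i : MvPolynomial (Fin n) K) ^ k})) =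
      {𝔭 ∈ associatedPrimes (MvPolynomial (Fin n) K) (MvPolynomial (Fin n) K ⧸ I) |
        (X i : MvPolynomial (Fin n) K) ∈ 𝔭})
    (𝔭 : Ideal (MvPolynomial (Fin n) K)) (h𝔭 : 𝔭 ∈ I.minimalPrimes)
    (hx𝔭 : (X i : MvPolynomial (Fin n) K) ∉ 𝔭) :
    (∃ 𝔮 ∈ I.minimalPrimes, (X i : MvPolynomial (Fin n) K) ∈ 𝔮 ∧
      𝔮 ≤ 𝔭 + Ideal.span {(X i : MvPolynomial (Fin n) K) ^ k}) ∧ k = 1 := by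
  classical
  have hrad := radical_sf hsf
  obtain ⟨S, hS, hI⟩ := hsf
  have hpp : 𝔭.IsPrime := h𝔭.1.1
  have hIp : I ≤ 𝔭 := h𝔭.1.2
  set D : Set (Fin n) := {j | (X j : MvPolynomial (Fin n) K) ∈ 𝔭} with hD
  have hgen : 𝔭 = Ideal.span (X '' D) := by
    have hle : Ideal.span (X '' D) ≤ 𝔭 := by
      rw [Ideal.span_le]
      rintro _ ⟨j, hj, rfl⟩
      exact hj
    refine le_antisymm (h𝔭.2 ⟨isPrime_P D, ?_⟩ hle) hle
    rw [hI, Ideal.span_le]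
    rintro _ ⟨a, ha, rfl⟩
    refine (monomial_mem_P _ a).2 ?_
    have h1 : (monomial a (1 : K)) ∈ 𝔭 := hIp (hI ▸ Ideal.subset_span ⟨a, ha, rfl⟩)
    rw [monomial_eq, C_1, one_mul, Finsupp.prod, hpp.prod_mem_iff] at h1
    obtain ⟨j, hj, hj'⟩ := h1
    exact ⟨j, hpp.mem_of_pow_mem _ hj', Finsupp.mem_support_iff.1 hj⟩
  set P := Ideal.span (X '' (insert i D) : Set (MvPolynomial (Fin n) K)) with hP
  have hPprime : P.IsPrime := isPrime_P _
  have hPsum : P = 𝔭 + Ideal.span {(X i : MvPolynomial (Fin n) K)} := by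
    rw [hP, Set.image_insert_eq, Ideal.span_insert, ← hgen, sup_comm]; rfl
  have hpP : 𝔭 ≤ P := hPsum ▸ le_sup_left
  have hxP : (X i : MvPolynomial (Fin n) K) ∈ P := (X_mem_P _ _).2 (Set.mem_insert _ _)
  have hk1 : k = 1 := by
    by_contra hk1
    obtain ⟨k, rfl⟩ : ∃ t, k = t + 2 := ⟨k - 2, by omega⟩
    let mF : Fin n →₀ ℕ := Finsupp.equivFunOnFinite.symm (fun j => if j ∈ D ∨ j = i then 0 else 1)
    have hmF : ∀ j, mF j = if j ∈ D ∨ j = i then 0 else 1 := fun j => rfl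
    have hF : (monomial mF 1 : MvPolynomial (Fin n) K) ∉ P := by
      rw [hP, monomial_mem_P]
      rintro ⟨j, hj, hj'⟩
      apply hj'
      rw [hmF, if_pos]
      exact (Set.mem_insert_iff.1 hj).symm
    have hPass : P ∈ associatedPrimes (MvPolynomial (Fin n) K)
        (MvPolynomial (Fin n) K ⧸ (I + Ideal.span {(X i : MvPolynomial (Fin n) K) ^ (k+2)})) := by
      refine Submodule.isAssociatedPrime_iff.2 ⟨hPprime,
        Ideal.Quotient.mk _ (monomial mF 1 * X i ^ (k+1)), ?_⟩
      have key : ∀ r, r ∈ Submodule.colon ⊥ {Ideal.Quotient.mk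
          (I + Ideal.span {(X i : MvPolynomial (Fin n) K) ^ (k+2)}) (monomial mF 1 * X i ^ (k+1))} ↔
          r * (monomial mF 1 * X i ^ (k+1)) ∈
            I + Ideal.span {(X i : MvPolynomial (Fin n) K) ^ (k+2)} := by
        intro r
        rw [Submodule.mem_colon_singleton, Submodule.mem_bot, ← Ideal.Quotient.eq_zero_iff_mem]
        rfl
      apply le_antisymm
      · rw [hP, Ideal.span_le]
        rintro _ ⟨l, hl, rfl⟩
        refine (key _).2 ?_
        by_cases hli : l = i
        · subst hli
          refine Ideal.mem_sup_right (Ideal.mem_span_singleton.2 ⟨monomial mF 1, by ring⟩)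
        have hlD : l ∈ D := (Set.mem_insert_iff.1 hl).resolve_left hli
        refine Ideal.mem_sup_left ?_
        have hnot : ¬ I ≤ Ideal.span (X '' (D \ {l}) : Set (MvPolynomial (Fin n) K)) := by
          intro h
          have h2 := h𝔭.2 ⟨isPrime_P _, h⟩ (by
            rw [hgen]; exact Ideal.span_mono (Set.image_mono Set.diff_subset))
          have h3 := (X_mem_P _ _).1 (h2 hlD)
          exact h3.2 rfl
        rw [hI, Ideal.span_le, Set.not_subset] at hnot
        obtain ⟨_, ⟨a, ha, rfl⟩, hna⟩ := hnot
        have hna' : ¬ ∃ j ∈ D \ {l}, a j ≠ 0 := fun h => hna ((monomial_mem_P _ a).2 h)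
        push Not at hna'
        have heq : (X l * (monomial mF 1 * X i ^ (k+1)) : MvPolynomial (Fin n) K) =
            monomial (Finsupp.single l 1 + (mF + Finsupp.single i (k+1))) 1 := by
          rw [X_pow_eq_monomial, X, monomial_mul, monomial_mul]; simp
        rw [heq, hI, mem_ideal_span_monomial_image, support_monomial, if_neg one_ne_zero]
        intro xi hxi
        rw [Finset.mem_singleton] at hxi
        subst hxi
        refine ⟨a, ha, ?_⟩
        rw [Finsupp.le_def]
        intro j
        have h1 := hS a ha j
        simp only [Finsupp.add_apply, hmF, Finsupp.single_apply]
        by_cases hjl : l = j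
        · rw [if_pos hjl]; omega
        by_cases hji : i = j
        · rw [if_pos hji]; omega
        by_cases hjD : j ∈ D
        · have := hna' j ⟨hjD, fun h => hjl h.symm⟩
          omega
        · rw [if_neg (c := j ∈ D ∨ j = i) (by rintro (h | h); exacts [hjD h, hji h.symm])]
          omega
      · intro g hg
        have h1 := (key g).1 hg
        obtain ⟨u, hu, v, hv, huv⟩ := Submodule.mem_sup.1 h1
        obtain ⟨w, rfl⟩ := Ideal.mem_span_singleton.1 hv
        have h2 : X i ^ (k+1) * (g * monomial mF 1 - X i * w) ∈ 𝔭 := by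
          have : X i ^ (k+1) * (g * monomial mF 1 - X i * w) = u := by
            linear_combination -huv
          rw [this]; exact hIp hu
        have h3 := (hpp.mem_or_mem h2).resolve_left (fun h => hx𝔭 (hpp.mem_of_pow_mem _ h))
        have h4 : g * monomial mF 1 ∈ P := by
          have := P.add_mem (hpP h3) (P.mul_mem_right w hxP)
          simpa using this
        exact (hPprime.mem_or_mem h4).resolve_right hF
    rw [hass] at hPass
    have hmin := min_of_ass hrad hPass.1
    exact hx𝔭 (hmin.2 ⟨hpp, hIp⟩ hpP hxP)
  refine ⟨?_, hk1⟩
  subst hk1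
  rw [pow_one] at hass ⊢
  rw [← hPsum]
  have hle : I + Ideal.span {(X i : MvPolynomial (Fin n) K)} ≤ P := by
    rw [hPsum]; exact sup_le_sup_right hIp _
  obtain ⟨q, hq, hqP⟩ := Ideal.exists_minimalPrimes_le hle
  have hq2 : q ∈ associatedPrimes (MvPolynomial (Fin n) K)
      (MvPolynomial (Fin n) K ⧸ (I + Ideal.span {(X i : MvPolynomial (Fin n) K)})) := by
    apply Module.associatedPrimes.minimalPrimes_annihilator_subset_associatedPrimes
    rwa [Ideal.annihilator_quotient]
  rw [hass] at hq2
  exact ⟨q, min_of_ass hrad hq2.1, hq2.2, hqP⟩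

end Paper
end

section
/- If I is an unmixed ass-decomposable monomial ideal in R = K[x_1,…,x_n], then its radical √I is also an ass-decomposable monomial ideal. -/
open MvPolynomial

namespace Paper

section General

variable {A : Type} [CommRing A] [IsNoetherianRing A]

lemma mem_ass_iff (I p : Ideal A) :
    p ∈ associatedPrimes A (A ⧸ I) ↔ p.IsPrime ∧ ∃ f : A, ∀ g, g ∈ p ↔ g * f ∈ I := by
  rw [AssociatedPrimes.mem_iff, isAssociatedPrime_iff]
  refine and_congr_right fun _ => ?_
  constructor
  · rintro ⟨x, hx⟩
    obtain ⟨f, rfl⟩ := Ideal.Quotient.mk_surjective x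
    refine ⟨f, fun g => ?_⟩
    rw [hx, Submodule.mem_colon_singleton, Submodule.mem_bot, ← Ideal.Quotient.eq_zero_iff_mem,
      map_mul]
    rfl
  · rintro ⟨f, hf⟩
    refine ⟨Ideal.Quotient.mk I f, ?_⟩
    ext g
    rw [hf, Submodule.mem_colon_singleton, Submodule.mem_bot, ← Ideal.Quotient.eq_zero_iff_mem,
      map_mul]
    rfl

lemma le_of_mem_ass {I p : Ideal A} (h : p ∈ associatedPrimes A (A ⧸ I)) : I ≤ p := by
  obtain ⟨_, f, hf⟩ := (mem_ass_iff I p).1 h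
  intro g hg
  exact (hf g).2 (I.mul_mem_right _ hg)

lemma min_subset_ass (I : Ideal A) : I.minimalPrimes ⊆ associatedPrimes A (A ⧸ I) := by
  have h := Module.associatedPrimes.minimalPrimes_annihilator_subset_associatedPrimes A (A ⧸ I)
  rwa [Ideal.annihilator_quotient] at h

lemma ass_eq_min_of_radical {I : Ideal A} (hI : I.IsRadical) :
    associatedPrimes A (A ⧸ I) = I.minimalPrimes := by
  refine subset_antisymm ?_ (min_subset_ass I)
  intro p hp
  obtain ⟨hpp, f, hf⟩ := (mem_ass_iff I p).1 hp
  refine ⟨⟨hpp, le_of_mem_ass hp⟩, ?_⟩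
  rintro q ⟨hq, hIq⟩ hqp g hg
  have h1 : g * f ∈ q := hIq ((hf g).1 hg)
  rcases hq.mem_or_mem h1 with h | h
  · exact h
  · exfalso
    have h2 : f * f ∈ I := (hf f).1 (hqp h)
    have h3 : f ∈ I := hI ⟨2, by rwa [pow_two]⟩
    exact hpp.ne_top ((Ideal.eq_top_iff_one _).2 ((hf 1).2 (by simpa using h3)))

lemma ass_colon_subset (I : Ideal A) (m : A) :
    associatedPrimes A (A ⧸ (I.colon (Ideal.span {m}))) ⊆ associatedPrimes A (A ⧸ I) := by
  intro p hp
  obtain ⟨hpp, f, hf⟩ := (mem_ass_iff _ p).1 hp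
  refine (mem_ass_iff _ p).2 ⟨hpp, f * m, fun g => ?_⟩
  rw [hf, Ideal.mem_colon_span_singleton, mul_assoc]

lemma isRadical_colon {I : Ideal A} (hI : I.IsRadical) (m : A) :
    (I.colon (Ideal.span {m})).IsRadical := by
  rintro f ⟨N, hN⟩
  rw [Ideal.mem_colon_span_singleton] at hN ⊢
  refine hI ⟨N + 1, ?_⟩
  have : (f * m) ^ (N + 1) = (f ^ N * m) * (f * m ^ N) := by ring
  rw [this]
  exact I.mul_mem_right _ hN

lemma ass_colon_radical (I : Ideal A) (m : A) :
    associatedPrimes A (A ⧸ (I.radical.colon (Ideal.span {m}))) =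
      {p ∈ I.minimalPrimes | m ∉ p} := by
  have hr : I.radical.IsRadical := Ideal.radical_isRadical I
  ext p
  constructor
  · intro hp
    have h1 := ass_colon_subset _ _ hp
    rw [ass_eq_min_of_radical hr, Ideal.radical_minimalPrimes] at h1
    refine ⟨h1, fun hm => ?_⟩
    obtain ⟨hpp, f, hf⟩ := (mem_ass_iff _ p).1 hp
    have h2 := (hf m).1 hm
    rw [Ideal.mem_colon_span_singleton] at h2
    have h3 : f * m ∈ I.radical := hr ⟨2, by
      have : (f * m) ^ 2 = f * (m * f * m) := by ring
      rw [this]; exact Ideal.mul_mem_left _ _ h2⟩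
    exact hpp.ne_top ((Ideal.eq_top_iff_one _).2 ((hf 1).2 (by
      rw [one_mul, Ideal.mem_colon_span_singleton]; exact h3)))
  · rintro ⟨hp, hm⟩
    rw [ass_eq_min_of_radical (isRadical_colon hr m)]
    have hpp : p.IsPrime := hp.1.1
    refine ⟨⟨hpp, fun f hf => ?_⟩, ?_⟩
    · rw [Ideal.mem_colon_span_singleton] at hf
      exact (hpp.mem_or_mem ((Ideal.IsPrime.radical_le_iff hpp).2 hp.1.2 hf)).resolve_right hm
    · rintro q ⟨hq, hIq⟩ hqp
      refine hp.2 ⟨hq, fun f hf => hIq ?_⟩ hqp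
      rw [Ideal.mem_colon_span_singleton]
      exact Ideal.mul_mem_right _ _ (Ideal.le_radical hf)

/-- No embedded primes. -/
def NoEmb (I : Ideal A) : Prop := associatedPrimes A (A ⧸ I) ⊆ I.minimalPrimes


lemma NoEmb.mono {I J : Ideal A} (h : NoEmb I) (hIJ : I ≤ J)
    (hs : associatedPrimes A (A ⧸ J) ⊆ associatedPrimes A (A ⧸ I)) : NoEmb J := by
  intro p hp
  have h1 := h (hs hp)
  exact ⟨⟨h1.1.1, le_of_mem_ass hp⟩, fun q hq hqp => h1.2 ⟨hq.1, hIJ.trans hq.2⟩ hqp⟩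

lemma NoEmb.eq {I : Ideal A} (h : NoEmb I) : associatedPrimes A (A ⧸ I) = I.minimalPrimes :=
  subset_antisymm h (min_subset_ass I)

lemma noEmb_of_unmixed {I : Ideal A} (h : IsUnmixed I) (hfin : ringKrullDim A < ⊤) : NoEmb I := by
  intro p hp
  have hpp : p.IsPrime := ((mem_ass_iff _ _).1 hp).1
  obtain ⟨q, hq, hqp⟩ := Ideal.exists_minimalPrimes_le (le_of_mem_ass hp)
  by_cases hpq : p ≤ q
  · rwa [le_antisymm hpq hqp]
  exfalso
  have e : ringKrullDim (A ⧸ q) = ringKrullDim (A ⧸ p) :=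
    (h q (min_subset_ass I hq)).symm.trans (h p hp)
  obtain ⟨r, hrp, hrq⟩ := Set.not_subset.1 hpq
  have hqq : q.IsPrime := hq.1.1
  have hr : Ideal.Quotient.mk q r ∈ nonZeroDivisors (A ⧸ q) := by
    apply mem_nonZeroDivisors_of_ne_zero
    rwa [Ne, Ideal.Quotient.eq_zero_iff_mem]
  have h1 := ringKrullDim_quotient_succ_le_of_nonZeroDivisor hr
  let φ : (A ⧸ q) ⧸ Ideal.span {Ideal.Quotient.mk q r} →+* A ⧸ p :=
    Ideal.Quotient.lift _ (Ideal.Quotient.factor hqp) (by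
      intro a ha
      have : Ideal.span {Ideal.Quotient.mk q r} ≤ RingHom.ker (Ideal.Quotient.factor hqp) := by
        rw [Ideal.span_singleton_le_iff_mem, RingHom.mem_ker, Ideal.Quotient.factor_mk]
        exact Ideal.Quotient.eq_zero_iff_mem.2 hrp
      exact this ha)
  have hφ : Function.Surjective φ :=
    Ideal.Quotient.lift_surjective_of_surjective _ _ (Ideal.Quotient.factor_surjective hqp)
  have h2 := ringKrullDim_le_of_surjective φ hφ
  have h3 := ringKrullDim_le_of_surjective _ (Ideal.Quotient.mk_surjective (I := p))
  have h4 : ringKrullDim (A ⧸ p) + 1 ≤ ringKrullDim (A ⧸ p) := by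
    rw [← e] at h2 ⊢
    exact (add_le_add_left h2 1).trans h1
  have h5 : 0 ≤ ringKrullDim (A ⧸ p) := ringKrullDim_nonneg_of_nontrivial
  have h6 := h3.trans_lt hfin
  generalize ringKrullDim (A ⧸ p) = d at h4 h5 h6
  induction d with
  | bot => simp at h5
  | coe d =>
    induction d with
    | top => exact absurd h6 (by simp)
    | coe d =>
      have : ((d + 1 : ℕ) : WithBot ℕ∞) ≤ ((d : ℕ) : WithBot ℕ∞) := by exact_mod_cast h4
      have := Nat.cast_le.1 this
      omega

end General

section Mon

variable {n : ℕ} {K : Type} [Field K]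

/-- Monomial ideals, through supports. -/
def Mon (I : Ideal (MvPolynomial (Fin n) K)) : Prop :=
  ∀ f ∈ I, ∀ a ∈ f.support, monomial a (1 : K) ∈ I

lemma mon_of_isMonomialIdeal {I : Ideal (MvPolynomial (Fin n) K)} (h : IsMonomialIdeal I) :
    Mon I := by
  obtain ⟨S, rfl⟩ := h
  intro f hf a ha
  rw [mem_ideal_span_monomial_image] at hf ⊢
  intro b hb
  have : b = a := by
    have := support_monomial_subset hb
    simpa using this
  exact this ▸ hf a ha

lemma Mon.colon {I : Ideal (MvPolynomial (Fin n) K)} (h : Mon I) (i : Fin n) (k : ℕ) :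
    Mon (I.colon (Ideal.span {(X i : MvPolynomial (Fin n) K) ^ k})) := by
  intro f hf a ha
  rw [Ideal.mem_colon_span_singleton] at hf ⊢
  rw [X_pow_eq_monomial] at hf ⊢
  rw [monomial_mul, one_mul]
  apply h _ hf
  rw [mem_support_iff] at ha ⊢
  rwa [coeff_mul_monomial, mul_one]

lemma Mon.add {I : Ideal (MvPolynomial (Fin n) K)} (h : Mon I) (i : Fin n) (k : ℕ) :
    Mon (I + Ideal.span {(X i : MvPolynomial (Fin n) K) ^ k}) := by
  intro f hf a ha
  obtain ⟨g, hg, q, hq, rfl⟩ := Submodule.mem_sup.1 hf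
  rcases Finset.mem_union.1 (support_add ha) with h1 | h1
  · exact Submodule.mem_sup_left (h _ hg _ h1)
  · refine Submodule.mem_sup_right ?_
    have e : Ideal.span {(X i : MvPolynomial (Fin n) K) ^ k} =
        Ideal.span ((fun a => monomial a (1 : K)) '' {Finsupp.single i k}) := by
      rw [Set.image_singleton, X_pow_eq_monomial]
    rw [e] at hq ⊢
    exact mon_of_isMonomialIdeal ⟨_, rfl⟩ _ hq _ h1

/-- Setting a variable to zero. -/
noncomputable def kill (i : Fin n) : MvPolynomial (Fin n) K →ₐ[K] MvPolynomial (Fin n) K :=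
  aeval (fun j => if j = i then 0 else X j)

lemma kill_X_self (i : Fin n) : kill (K := K) i (X i) = 0 := by simp [kill]

lemma kill_X_ne {i j : Fin n} (h : j ≠ i) : kill (K := K) i (X j) = X j := by simp [kill, h]

lemma kill_sub_mem (i : Fin n) (f : MvPolynomial (Fin n) K) :
    f - kill i f ∈ Ideal.span {(X i : MvPolynomial (Fin n) K)} := by
  rw [← Ideal.Quotient.eq_zero_iff_mem, map_sub, sub_eq_zero]
  let π := Ideal.Quotient.mkₐ K (Ideal.span {(X i : MvPolynomial (Fin n) K)})
  have : π = π.comp (kill i) := by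
    apply MvPolynomial.algHom_ext
    intro j
    by_cases h : j = i
    · subst h
      rw [AlgHom.comp_apply, kill_X_self, map_zero]
      exact Ideal.Quotient.eq_zero_iff_mem.2 (Ideal.mem_span_singleton_self _)
    · rw [AlgHom.comp_apply, kill_X_ne h]
  exact DFunLike.congr_fun this f

lemma kill_monomial (i : Fin n) (a : Fin n →₀ ℕ) (c : K) :
    kill i (monomial a c) = monomial a c ∨ kill i (monomial a c) = 0 := by
  by_cases h : a i = 0
  · left
    rw [monomial_eq, map_mul, Finsupp.prod, map_prod]
    congr 1
    · exact (kill i).commutes c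
    · refine Finset.prod_congr rfl fun j hj => ?_
      have : j ≠ i := by
        rintro rfl
        exact (Finsupp.mem_support_iff.1 hj) h
      rw [map_pow, kill_X_ne this]
  · right
    rw [monomial_eq, map_mul, Finsupp.prod, map_prod]
    rw [Finset.prod_eq_zero (Finsupp.mem_support_iff.2 h), mul_zero]
    rw [map_pow, kill_X_self, zero_pow h]

lemma Mon.kill_mem {I : Ideal (MvPolynomial (Fin n) K)} (h : Mon I) (i : Fin n)
    {f : MvPolynomial (Fin n) K} (hf : f ∈ I) : kill i f ∈ I := by
  rw [f.as_sum, map_sum]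
  refine Ideal.sum_mem _ fun a ha => ?_
  rcases kill_monomial i a (coeff a f) with e | e <;> rw [e]
  · have := I.mul_mem_left (C (coeff a f)) (h f hf a ha)
    rwa [C_mul_monomial, mul_one] at this
  · exact I.zero_mem

lemma main_eq {I : Ideal (MvPolynomial (Fin n) K)} (h : Mon I) (i : Fin n) (k : ℕ) (hk : 1 ≤ k)
    (m : MvPolynomial (Fin n) K) (hm : kill i m = m) :
    I.radical.colon (Ideal.span {m}) + Ideal.span {(X i : MvPolynomial (Fin n) K) ^ 1} =
      (I + Ideal.span {(X i : MvPolynomial (Fin n) K) ^ k}).radical.colon (Ideal.span {m}) := by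
  rw [pow_one]
  apply le_antisymm
  · refine sup_le ?_ ?_
    · intro f hf
      rw [Ideal.mem_colon_span_singleton] at hf ⊢
      exact Ideal.radical_mono (show I ≤ I ⊔ _ from le_sup_left) hf
    · rw [Ideal.span_singleton_le_iff_mem, Ideal.mem_colon_span_singleton]
      exact Ideal.mul_mem_right _ _
        ⟨k, Submodule.mem_sup_right (Ideal.mem_span_singleton_self _)⟩
  · intro f hf
    rw [Ideal.mem_colon_span_singleton] at hf
    obtain ⟨N, hN⟩ := hf
    obtain ⟨g, hg, q, hq, e⟩ := Submodule.mem_sup.1 hN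
    obtain ⟨c, rfl⟩ := Ideal.mem_span_singleton.1 hq
    have e2 := congrArg (kill i) e
    rw [map_add, map_mul, map_pow, map_pow, map_mul, kill_X_self, hm, zero_pow (by omega),
      zero_mul, add_zero] at e2
    have h1 : kill i f * m ∈ I.radical := ⟨N, e2 ▸ h.kill_mem i hg⟩
    have : f = kill i f + (f - kill i f) := by ring
    rw [this]
    exact Submodule.add_mem_sup (Ideal.mem_colon_span_singleton.2 h1) (kill_sub_mem i f)

lemma colon_eq (I : Ideal (MvPolynomial (Fin n) K)) (x : MvPolynomial (Fin n) K) (k : ℕ)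
    (m : MvPolynomial (Fin n) K) (hm : x ∣ m) :
    (I.colon (Ideal.span {x ^ k})).radical.colon (Ideal.span {m}) =
      I.radical.colon (Ideal.span {m}) := by
  obtain ⟨c, rfl⟩ := hm
  ext f
  rw [Ideal.mem_colon_span_singleton, Ideal.mem_colon_span_singleton]
  constructor
  · rintro ⟨N, hN⟩
    rw [Ideal.mem_colon_span_singleton] at hN
    refine ⟨N + k, ?_⟩
    have : (f * (x * c)) ^ (N + k) = ((f * (x * c)) ^ N * x ^ k) * (f * c) ^ k := by ring
    rw [this]
    exact I.mul_mem_right _ hN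
  · rintro ⟨N, hN⟩
    exact ⟨N, Ideal.mem_colon_span_singleton.2 (I.mul_mem_right _ hN)⟩

lemma colon_top_iff (I : Ideal (MvPolynomial (Fin n) K)) (m : MvPolynomial (Fin n) K) :
    m ∈ I ↔ I.colon (Ideal.span {m}) = ⊤ := by
  rw [Ideal.eq_top_iff_one, Ideal.mem_colon_span_singleton, one_mul]

lemma main_ind (I : Ideal (MvPolynomial (Fin n) K)) (hdec : IsAssDecomposable I) :
    Mon I → NoEmb I → ∀ s : Finset (Fin n), (∏ j ∈ s, X j : MvPolynomial (Fin n) K) ∉ I.radical →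
      IsAssDecomposable (I.radical.colon (Ideal.span {(∏ j ∈ s, X j : MvPolynomial (Fin n) K)})) := by
  induction hdec with
  | @primary I h =>
    intro _ _ s hs
    have hp : I.radical.IsPrime := (Ideal.isPrime_radical h)
    have : I.radical.colon (Ideal.span {(∏ j ∈ s, X j : MvPolynomial (Fin n) K)}) = I.radical := by
      ext f
      rw [Ideal.mem_colon_span_singleton]
      exact ⟨fun hf => (hp.mem_or_mem hf).resolve_right hs, fun hf => Ideal.mul_mem_right _ _ hf⟩
    rw [this]
    exact .primary hp.isPrimary
  | @step I i k hk hx hass h1 h2 ih1 ih2 =>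
    intro hM hE s hs
    have hMJ := hM.add i k
    have hML := hM.colon i k
    have hEJ : NoEmb (I + Ideal.span {(X i : MvPolynomial (Fin n) K) ^ k}) :=
      hE.mono le_sup_left (by rw [hass]; exact Set.sep_subset _ _)
    have hEL : NoEmb (I.colon (Ideal.span {(X i : MvPolynomial (Fin n) K) ^ k})) :=
      hE.mono Ideal.le_colon (ass_colon_subset _ _)
    have key : ∀ t : Finset (Fin n), i ∈ t →
        (∏ j ∈ t, X j : MvPolynomial (Fin n) K) ∉ I.radical →
        IsAssDecomposable
          (I.radical.colon (Ideal.span {(∏ j ∈ t, X j : MvPolynomial (Fin n) K)})) := by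
      intro t hit ht
      have e := colon_eq I (X i) k (∏ j ∈ t, X j) (Finset.dvd_prod_of_mem _ hit)
      rw [← e]
      refine ih2 hML hEL t ?_
      rwa [colon_top_iff, e, ← colon_top_iff]
    by_cases his : i ∈ s
    · exact key s his hs
    set m : MvPolynomial (Fin n) K := ∏ j ∈ s, X j with hm
    have hkm : kill i m = m := by
      rw [hm, map_prod]
      exact Finset.prod_congr rfl fun j hj => kill_X_ne (by rintro rfl; exact his hj)
    have hmJ : m ∉ (I + Ideal.span {(X i : MvPolynomial (Fin n) K) ^ k}).radical := by
      rintro ⟨N, hN⟩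
      obtain ⟨g, hg, q, hq, e⟩ := Submodule.mem_sup.1 hN
      obtain ⟨c, rfl⟩ := Ideal.mem_span_singleton.1 hq
      have e2 := congrArg (kill i) e
      rw [map_add, map_mul, map_pow, map_pow, kill_X_self, hkm, zero_pow (by omega),
        zero_mul, add_zero] at e2
      exact hs ⟨N, e2 ▸ hM.kill_mem i hg⟩
    have hJ := ih1 hMJ hEJ s hmJ
    rw [← hm] at hJ
    have eJ := main_eq hM i k hk m hkm
    by_cases hmx : X i * m ∈ I.radical
    · have : I.radical.colon (Ideal.span {m}) + Ideal.span {(X i : MvPolynomial (Fin n) K) ^ 1} =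
          I.radical.colon (Ideal.span {m}) := by
        refine sup_eq_left.2 ?_
        rw [pow_one, Ideal.span_singleton_le_iff_mem, Ideal.mem_colon_span_singleton]
        exact hmx
      rw [← this, eJ]
      exact hJ
    · refine .step i 1 le_rfl ?_ ?_ ?_ ?_
      · rw [(isRadical_colon (Ideal.radical_isRadical I) m).radical,
          Ideal.mem_colon_span_singleton]
        exact hmx
      · rw [eJ, ass_colon_radical, ass_colon_radical, ← hEJ.eq, hass, hE.eq]
        ext p
        simp only [Set.mem_ofPred_eq]
        tauto
      · rw [eJ]; exact hJ
      · have e : (I.radical.colon (Ideal.span {m})).colon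
            (Ideal.span {(X i : MvPolynomial (Fin n) K) ^ 1}) =
            I.radical.colon (Ideal.span {(∏ j ∈ insert i s, X j : MvPolynomial (Fin n) K)}) := by
          ext f
          rw [Finset.prod_insert his, Ideal.mem_colon_span_singleton,
            Ideal.mem_colon_span_singleton, Ideal.mem_colon_span_singleton, pow_one, mul_assoc]
        rw [e]
        refine key _ (Finset.mem_insert_self _ _) ?_
        rwa [Finset.prod_insert his]

end Mon

/-- The radical of an unmixed ass-decomposable monomial ideal is ass-decomposable. -/
theorem statement_8 (n : ℕ) (K : Type) [Field K] (I : Ideal (MvPolynomial (Fin n) K))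
    (hmon : IsMonomialIdeal I) (hunm : IsUnmixed I) (hdec : IsAssDecomposable I) :
    IsAssDecomposable I.radical := by
  have hfin : ringKrullDim (MvPolynomial (Fin n) K) < ⊤ := by
    rw [MvPolynomial.ringKrullDim_of_isNoetherianRing, ringKrullDim_eq_zero_of_field, zero_add]
    exact WithBot.coe_lt_coe.2 (ENat.natCast_lt_top (Nat.card (Fin n)))
  have hne : I.radical ≠ ⊤ := by
    cases hdec with
    | primary h => exact (Ideal.isPrime_radical h).ne_top
    | step i k hk hx => exact fun h => hx (h ▸ Submodule.mem_top)
  have := main_ind I hdec (mon_of_isMonomialIdeal hmon) (noEmb_of_unmixed hunm hfin) ∅ (by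
    rw [Finset.prod_empty]
    exact fun h => hne ((Ideal.eq_top_iff_one _).2 h))
  rw [Finset.prod_empty] at this
  have e : I.radical.colon (Ideal.span {(1 : MvPolynomial (Fin n) K)}) = I.radical := by
    ext f
    rw [Ideal.mem_colon_span_singleton, mul_one]
  rwa [e] at this

end Paper
end
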